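/- Let P and Q be finite sets of points in the plane (possibly containing collinear triples), each of cardinality n with n ≤ 5, each not contained in a line, such that P and Q have the same number of convex hull points. Then there exist a triangulation T_P of P and a triangulation T_Q of Q that are compatible. -/

import Mathlib

open Set

/-- Points of the plane. -/
abbrev Pt : Type := ℝ × ℝ

noncomputable section

/-- The determinant of two plane vectors. -/
def det2 (u v : Pt) : ℝ := u.1 * v.2 - u.2 * v.1

/-- A triple `(a,b,c)` of points is clockwise-ordered if `det (b-a, c-a) < 0`. -/
def Clockwise (a b c : Pt) : Prop := det2 (b - a) (c - a) < 0

/-- The closed segments `[a,b]` and `[c,d]` cross: they intersect in a point that is not a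
common endpoint of the two segments. -/
def Crosses (a b c d : Pt) : Prop :=
  ∃ x : Pt, x ∈ segment ℝ a b ∧ x ∈ segment ℝ c d ∧
    ¬((x = a ∨ x = b) ∧ (x = c ∨ x = d))

/-- `T` is a set of unordered pairs of distinct points of `P` whose corresponding
segments are pairwise non-crossing. -/
def ValidSegs (P : Finset Pt) (T : Set (Sym2 Pt)) : Prop :=
  (∀ e ∈ T, ∃ a b : Pt, a ∈ P ∧ b ∈ P ∧ a ≠ b ∧ e = s(a, b)) ∧
  (∀ a b c d : Pt, s(a, b) ∈ T → s(c, d) ∈ T → s(a, b) ≠ s(c, d) → ¬ Crosses a b c d)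

/-- A triangulation of `P`: a maximal (w.r.t. inclusion) set of unordered pairs of distinct
points of `P`, no two of whose segments cross. -/
def IsTriangulation (P : Finset Pt) (T : Set (Sym2 Pt)) : Prop :=
  ValidSegs P T ∧ ∀ T' : Set (Sym2 Pt), ValidSegs P T' → T ⊆ T' → T' = T

/-- A convex hull point of `P`: a point of `P` on the boundary of `conv P`. -/
def HullPoint (P : Finset Pt) (p : Pt) : Prop :=
  p ∈ P ∧ p ∈ frontier (convexHull ℝ (P : Set Pt))

/-- An internal point of `P`: a point of `P` in the interior of `conv P`. -/
def InternalPoint (P : Finset Pt) (p : Pt) : Prop :=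
  p ∈ P ∧ p ∈ interior (convexHull ℝ (P : Set Pt))

/-- The number of convex hull points of `P`. -/
def hullCount (P : Finset Pt) : ℕ := {p : Pt | HullPoint P p}.ncard

/-- The number of internal points of `P`. -/
def internalCount (P : Finset Pt) : ℕ := {p : Pt | InternalPoint P p}.ncard

/-- The open triangle with vertices `a`, `b`, `c`. -/
def openTriangle (a b c : Pt) : Set Pt := interior (convexHull ℝ ({a, b, c} : Set Pt))

/-- `(a,b,c)` is a triangle of the triangulation `T` of `P`: the three points are distinct
points of `P`, the three pairs are in `T`, and the open triangle `abc` contains no point of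
`P` and meets no segment of `T`. -/
def IsTriangleOf (P : Finset Pt) (T : Set (Sym2 Pt)) (a b c : Pt) : Prop :=
  a ∈ P ∧ b ∈ P ∧ c ∈ P ∧ a ≠ b ∧ b ≠ c ∧ a ≠ c ∧
  s(a, b) ∈ T ∧ s(b, c) ∈ T ∧ s(a, c) ∈ T ∧
  (∀ p ∈ P, p ∉ openTriangle a b c) ∧
  (∀ u v : Pt, s(u, v) ∈ T → ∀ x ∈ segment ℝ u v, x ∉ openTriangle a b c)

/-- Triangulations `TP` of `P` and `TQ` of `Q` are compatible via the bijection `φ : P → Q`: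
`(a,b,c)` is a clockwise-ordered triangle of `TP` iff `(φ a, φ b, φ c)` is a
clockwise-ordered triangle of `TQ`. -/
def CompatibleVia (P Q : Finset Pt) (TP TQ : Set (Sym2 Pt)) (φ : Pt → Pt) : Prop :=
  Set.BijOn φ (P : Set Pt) (Q : Set Pt) ∧
  ∀ a b c : Pt, a ∈ P → b ∈ P → c ∈ P →
    ((IsTriangleOf P TP a b c ∧ Clockwise a b c) ↔
     (IsTriangleOf Q TQ (φ a) (φ b) (φ c) ∧ Clockwise (φ a) (φ b) (φ c)))

/-- Triangulations `TP` of `P` and `TQ` of `Q` are compatible. -/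
def Compatible (P Q : Finset Pt) (TP TQ : Set (Sym2 Pt)) : Prop :=
  ∃ φ : Pt → Pt, CompatibleVia P Q TP TQ φ

/-- The degree of a point `p` in a triangulation `T`: the number of pairs of `T`
containing `p`. -/
def degreeIn (T : Set (Sym2 Pt)) (p : Pt) : ℕ := {e ∈ T | p ∈ e}.ncard

/-- `P` is in general position: no three points of `P` are collinear. -/
def GenPos (P : Finset Pt) : Prop :=
  ∀ a b c : Pt, a ∈ P → b ∈ P → c ∈ P → a ≠ b → b ≠ c → a ≠ c →
    ¬ Collinear ℝ ({a, b, c} : Set Pt)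

end

/-! ### Elementary plane geometry -/

/-- Signed orientation of a triple. -/
def ori (a b c : Pt) : ℝ := det2 (b - a) (c - a)

lemma ori_rot (a b c : Pt) : ori b c a = ori a b c := by
  simp only [ori, det2, Prod.fst_sub, Prod.snd_sub]; ring

lemma ori_swap (a b c : Pt) : ori b a c = - ori a b c := by
  simp only [ori, det2, Prod.fst_sub, Prod.snd_sub]; ring

lemma ori_self1 (a b : Pt) : ori a a b = 0 := by
  simp only [ori, det2, Prod.fst_sub, Prod.snd_sub]; ring

lemma ori_self2 (a b : Pt) : ori a b b = 0 := by
  simp only [ori, det2, Prod.fst_sub, Prod.snd_sub]; ring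

lemma ori_self3 (a b : Pt) : ori a b a = 0 := by
  simp only [ori, det2, Prod.fst_sub, Prod.snd_sub]; ring

lemma ori_comb (a b x y : Pt) (s t : ℝ) (h : s + t = 1) :
    ori a b (s • x + t • y) = s * ori a b x + t * ori a b y := by
  obtain rfl : t = 1 - s := by linarith
  simp only [ori, det2, Prod.fst_sub, Prod.snd_sub, Prod.fst_add, Prod.snd_add, Prod.smul_fst,
    Prod.smul_snd, smul_eq_mul]
  ring

lemma convex_ori (a b : Pt) : Convex ℝ {x : Pt | ori a b x ≤ 0} := by
  intro x hx y hy s t hs ht hst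
  simp only [mem_ofPred_eq] at *
  rw [ori_comb _ _ _ _ _ _ hst]
  nlinarith [mul_nonneg hs (neg_nonneg.2 hx), mul_nonneg ht (neg_nonneg.2 hy)]

lemma continuous_ori (a b : Pt) : Continuous fun x : Pt => ori a b x := by
  unfold ori det2; fun_prop

lemma ori_interior (a b x : Pt) (hab : a ≠ b) (hx : x ∈ interior {x : Pt | ori a b x ≤ 0}) :
    ori a b x < 0 := by
  by_contra hcon
  set v : Pt := (-(b.2 - a.2), b.1 - a.1) with hv
  have hc : Continuous fun e : ℝ => x + e • v := by fun_prop
  have h0 : ∀ᶠ e in nhds (0:ℝ), x + e • v ∈ {x : Pt | ori a b x ≤ 0} := by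
    have := hc.tendsto 0
    simp only [zero_smul, add_zero] at this
    exact this (mem_interior_iff_mem_nhds.1 hx)
  have h1 : ∀ᶠ e in nhdsWithin (0:ℝ) (Ioi 0), x + e • v ∈ {x : Pt | ori a b x ≤ 0} :=
    h0.filter_mono nhdsWithin_le_nhds
  obtain ⟨e, he, hpos⟩ := (h1.and self_mem_nhdsWithin).exists
  have hpos : 0 < e := hpos
  have he : ori a b (x + e • v) ≤ 0 := he
  have hs : ori a b (x + e • v) = ori a b x + e * ((b.1-a.1)^2 + (b.2-a.2)^2) := by
    simp only [ori, det2, hv, Prod.fst_sub, Prod.snd_sub, Prod.fst_add, Prod.snd_add,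
      Prod.smul_fst, Prod.smul_snd, smul_eq_mul]
    ring
  have hn : 0 < (b.1-a.1)^2 + (b.2-a.2)^2 := by
    by_contra hh
    apply hab
    have h1 : b.1 - a.1 = 0 := by nlinarith [sq_nonneg (b.1-a.1), sq_nonneg (b.2-a.2)]
    have h2 : b.2 - a.2 = 0 := by nlinarith [sq_nonneg (b.1-a.1), sq_nonneg (b.2-a.2)]
    exact Prod.ext (by linarith) (by linarith)
  nlinarith [mul_pos hpos hn]

/-- A segment on the nonpositive side of a line meets the line only at endpoints. -/
lemma seg_le {u w a b x : Pt} (hx : x ∈ segment ℝ a b) (ha : ori u w a ≤ 0)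
    (hb : ori u w b ≤ 0) :
    ori u w x ≤ 0 ∧ (ori u w x = 0 → (ori u w a < 0 → x = b) ∧ (ori u w b < 0 → x = a)) := by
  obtain ⟨s, t, hs, ht, hst, rfl⟩ := hx
  rw [ori_comb _ _ _ _ _ _ hst]
  refine ⟨by nlinarith, fun h => ⟨fun h1 => ?_, fun h1 => ?_⟩⟩
  · have : s = 0 := by nlinarith
    obtain rfl : t = 1 := by linarith
    simp [this]
  · have : t = 0 := by nlinarith
    obtain rfl : s = 1 := by linarith
    simp [this]

lemma crosses_of {a b c d : Pt} (h1 : ori b a c < 0) (h2 : ori a b d < 0)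
    (h3 : ori c d a ≤ 0) (h4 : ori d c b ≤ 0) : Crosses a b c d := by
  rw [ori_swap] at h1 h4
  have hD : ori a b c - ori a b d = ori c d b - ori c d a := by
    simp only [ori, det2, Prod.fst_sub, Prod.snd_sub]; ring
  set D := ori a b c - ori a b d with hDdef
  have hDpos : 0 < D := by linarith
  have hx1 : (-ori a b d / D) • c + (ori a b c / D) • d ∈ segment ℝ c d :=
    ⟨_, _, div_nonneg (by linarith) hDpos.le, div_nonneg (by linarith) hDpos.le,
      by rw [← add_div, div_eq_one_iff_eq hDpos.ne']; linarith, rfl⟩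
  have hx2 : (ori c d b / D) • a + (-ori c d a / D) • b ∈ segment ℝ a b :=
    ⟨_, _, div_nonneg (by linarith) hDpos.le, div_nonneg (by linarith) hDpos.le,
      by rw [← add_div, div_eq_one_iff_eq hDpos.ne']; linarith, rfl⟩
  have heq : (-ori a b d / D) • c + (ori a b c / D) • d
      = (ori c d b / D) • a + (-ori c d a / D) • b := by
    have e1 : D * (D⁻¹) = 1 := mul_inv_cancel₀ hDpos.ne'
    simp only [div_eq_inv_mul, mul_smul, ← smul_add]
    congr 1
    ext <;> simp only [ori, det2, Prod.fst_sub, Prod.snd_sub, Prod.fst_add, Prod.snd_add,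
      Prod.smul_fst, Prod.smul_snd, smul_eq_mul] <;> ring
  refine ⟨_, hx2, heq ▸ hx1, ?_⟩
  rw [← heq]
  have hf : ori a b ((-ori a b d / D) • c + (ori a b c / D) • d) = 0 := by
    rw [ori_comb]
    · field_simp; ring
    · rw [← add_div, div_eq_one_iff_eq hDpos.ne']; linarith
  rintro ⟨-, h | h⟩ <;> rw [h] at hf <;> linarith

lemma mem_openTriangle {a b c d : Pt} (h1 : ori a b d < 0) (h2 : ori b c d < 0)
    (h3 : ori c a d < 0) : d ∈ openTriangle a b c := by
  have hop : IsOpen {x : Pt | ori a b x < 0 ∧ ori b c x < 0 ∧ ori c a x < 0} :=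
    (isOpen_lt (continuous_ori a b) continuous_const).inter
      ((isOpen_lt (continuous_ori b c) continuous_const).inter
      (isOpen_lt (continuous_ori c a) continuous_const))
  refine interior_maximal ?_ hop (show d ∈ _ from ⟨h1, h2, h3⟩)
  rintro x ⟨h1, h2, h3⟩
  have hD : ori a b x + ori b c x + ori c a x = ori a b c := by
    simp only [ori, det2, Prod.fst_sub, Prod.snd_sub]; ring
  set D := ori a b c with hDdef
  have hDneg : D < 0 := by linarith
  have hx : x = (ori b c x / D) • a + (ori c a x / D) • b + (ori a b x / D) • c := by
    have : x = D⁻¹ • D • x := by rw [smul_smul, inv_mul_cancel₀ hDneg.ne, one_smul]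
    nth_rw 1 [this]
    simp only [div_eq_inv_mul, mul_smul, ← smul_add]
    congr 1
    rw [hDdef]
    ext <;> simp only [ori, det2, Prod.fst_sub, Prod.snd_sub, Prod.fst_add, Prod.snd_add,
      Prod.smul_fst, Prod.smul_snd, smul_eq_mul] <;> ring
  rw [convexHull_insert (by simp), convexHull_pair]
  have hcv := convex_convexHull ℝ ({a, b, c} : Set Pt)
  rw [← convexHull_pair, ← convexHull_insert (by simp), hx]
  have hs := hcv.sum_mem (t := Finset.univ) (w := ![ori b c x / D, ori c a x / D, ori a b x / D])
    (z := ![a, b, c]) ?_ ?_ ?_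
  · simpa [Fin.sum_univ_three] using hs
  · intro i _
    fin_cases i
    · exact div_nonneg_of_nonpos h2.le hDneg.le
    · exact div_nonneg_of_nonpos h3.le hDneg.le
    · exact div_nonneg_of_nonpos h1.le hDneg.le
  · simp only [Fin.sum_univ_three, Matrix.cons_val_zero, Matrix.cons_val_one, Matrix.cons_val]
    rw [← add_div, ← add_div, div_eq_one_iff_eq hDneg.ne]; linarith
  · intro i _
    apply subset_convexHull
    fin_cases i <;> simp

lemma openTriangle_sep {u w a b c x : Pt} (huw : u ≠ w) (ha : ori u w a ≤ 0)
    (hb : ori u w b ≤ 0) (hc : ori u w c ≤ 0) (hx : x ∈ openTriangle a b c) : ori u w x < 0 := by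
  refine ori_interior u w x huw (interior_mono ?_ hx)
  refine convexHull_min ?_ (convex_ori u w)
  intro y hy
  simp only [mem_insert_iff, mem_singleton_iff] at hy
  rcases hy with rfl | rfl | rfl <;> assumption

lemma exists_ori_neg {P : Finset Pt} (hP : ¬ Collinear ℝ (P : Set Pt)) :
    ∃ a b c : Pt, a ∈ P ∧ b ∈ P ∧ c ∈ P ∧ ori a b c < 0 := by
  by_contra hcon
  push Not at hcon
  apply hP
  by_cases hs : (P : Set Pt).Subsingleton
  · rcases hs.eq_empty_or_singleton with h | ⟨x, h⟩ <;> rw [h]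
    · exact collinear_empty ℝ _
    · exact collinear_singleton ℝ _
  rw [Set.not_subsingleton_iff] at hs
  obtain ⟨a, ha, b, hb, hab⟩ := hs
  rw [collinear_iff_of_mem ha]
  refine ⟨b - a, fun c hc => ?_⟩
  have h0 : ori a b c = 0 := by
    apply le_antisymm _ (hcon a b c ha hb hc)
    have := hcon b a c hb ha hc
    rw [ori_swap] at this; linarith
  have hn : (b.1-a.1)^2 + (b.2-a.2)^2 ≠ 0 := by
    intro hh
    apply hab
    have h1 : b.1 - a.1 = 0 := by nlinarith [sq_nonneg (b.1-a.1), sq_nonneg (b.2-a.2)]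
    have h2 : b.2 - a.2 = 0 := by nlinarith [sq_nonneg (b.1-a.1), sq_nonneg (b.2-a.2)]
    exact Prod.ext (by linarith) (by linarith)
  refine ⟨((b.1-a.1)*(c.1-a.1) + (b.2-a.2)*(c.2-a.2)) / ((b.1-a.1)^2 + (b.2-a.2)^2), ?_⟩
  simp only [ori, det2, Prod.fst_sub, Prod.snd_sub] at h0
  ext <;> simp only [vadd_eq_add, Prod.fst_add, Prod.snd_add, Prod.smul_fst, Prod.smul_snd,
    smul_eq_mul, Prod.fst_sub, Prod.snd_sub] <;> field_simp
  · linear_combination (-(b.2-a.2)) * h0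
  · linear_combination ((b.1-a.1)) * h0

/-- A point of the hull at which a halfplane touches is on the frontier. -/
lemma frontier_of {P : Finset Pt} {u v : Pt} (huv : u ≠ v) (hv : v ∈ P)
    (h : ∀ k ∈ P, ori u v k ≤ 0) : v ∈ frontier (convexHull ℝ (P : Set Pt)) := by
  refine ⟨subset_closure (subset_convexHull ℝ _ hv), fun hi => ?_⟩
  have := ori_interior u v v huv (interior_mono (convexHull_min (fun k hk => h k hk)
    (convex_ori u v)) hi)
  rw [ori_self2] at this
  exact lt_irrefl _ this

/-- If a point is on the frontier there is a nonzero functional supporting the hull at it. -/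
lemma supporting {P : Finset Pt} {v : Pt} (hP : (interior (convexHull ℝ (P : Set Pt))).Nonempty)
    (hv : v ∈ frontier (convexHull ℝ (P : Set Pt))) :
    ∃ g : Pt, g ≠ 0 ∧ ∀ k ∈ P, det2 g (k - v) ≤ 0 := by
  have hcv := convex_convexHull ℝ (P : Set Pt)
  obtain ⟨f, hf⟩ := geometric_hahn_banach_open_point hcv.interior isOpen_interior hv.2
  have hf' : ∀ k ∈ closure (interior (convexHull ℝ (P : Set Pt))), f k ≤ f v := by
    intro k hk
    exact closure_minimal (fun a ha => (hf a ha).le)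
      (isClosed_le f.continuous continuous_const) hk
  rw [hcv.closure_interior_eq_closure_of_nonempty_interior hP] at hf'
  have hlin : ∀ x : Pt, f x = x.1 * f (1, 0) + x.2 * f (0, 1) := by
    intro x
    have : x = x.1 • ((1:ℝ), (0:ℝ)) + x.2 • ((0:ℝ), (1:ℝ)) := by ext <;> simp
    conv_lhs => rw [this]
    simp only [map_add, map_smul, smul_eq_mul]
  refine ⟨(f (0, 1), - f (1, 0)), ?_, ?_⟩
  · intro h0
    obtain ⟨z, hz⟩ := hP
    have := hf z hz
    simp only [Prod.mk_eq_zero, neg_eq_zero] at h0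
    rw [hlin z, hlin v, h0.1, h0.2] at this
    simp at this
  · intro k hk
    have := hf' k (subset_closure (subset_convexHull ℝ _ hk))
    rw [hlin k, hlin v] at this
    simp only [det2, Prod.fst_sub, Prod.snd_sub]
    linarith

/-! ### Abstract triangulation certificates -/

/-- The segment set on the points `p i` given by an adjacency table. -/
def segSet {n : ℕ} (p : Fin n → Pt) (T : Fin n → Fin n → Bool) : Set (Sym2 Pt) :=
  {e | ∃ i j, T i j = true ∧ e = s(p i, p j)}

/-- `P` has a triangulation of combinatorial type `(T, F)`. -/
def Realizes (P : Finset Pt) {n : ℕ} (T : Fin n → Fin n → Bool)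
    (F : Fin n → Fin n → Fin n → Bool) : Prop :=
  ∃ p : Fin n → Pt, Function.Injective p ∧ P = Finset.univ.image p ∧
    IsTriangulation P (segSet p T) ∧
    ∀ i j k, (IsTriangleOf P (segSet p T) (p i) (p j) (p k) ∧ Clockwise (p i) (p j) (p k)) ↔
      F i j k = true

lemma compatible_of_realizes {P Q : Finset Pt} {n : ℕ} {T : Fin n → Fin n → Bool}
    {F : Fin n → Fin n → Fin n → Bool} (hP : Realizes P T F) (hQ : Realizes Q T F) :
    ∃ TP TQ : Set (Sym2 Pt), IsTriangulation P TP ∧ IsTriangulation Q TQ ∧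
      Compatible P Q TP TQ := by
  obtain ⟨p, hpi, hpP, hpT, hpF⟩ := hP
  obtain ⟨q, hqi, hqQ, hqT, hqF⟩ := hQ
  refine ⟨_, _, hpT, hqT, Function.extend p q id, ?_, ?_⟩
  · refine ⟨?_, ?_, ?_⟩
    · intro x hx
      rw [hpP] at hx
      simp only [Finset.coe_image, Finset.coe_univ, image_univ, mem_range] at hx
      obtain ⟨i, rfl⟩ := hx
      rw [hpi.extend_apply, hqQ]; simp
    · intro x hx y hy hxy
      rw [hpP] at hx hy
      simp only [Finset.coe_image, Finset.coe_univ, image_univ, mem_range] at hx hy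
      obtain ⟨i, rfl⟩ := hx
      obtain ⟨j, rfl⟩ := hy
      rw [hpi.extend_apply, hpi.extend_apply] at hxy
      rw [hqi hxy]
    · intro y hy
      rw [hqQ] at hy
      simp only [Finset.coe_image, Finset.coe_univ, image_univ, mem_range] at hy
      obtain ⟨i, rfl⟩ := hy
      refine ⟨p i, ?_, hpi.extend_apply _ _ _⟩
      rw [hpP]; simp
  · intro a b c ha hb hc
    rw [hpP] at ha hb hc
    simp only [Finset.mem_image, Finset.mem_univ, true_and] at ha hb hc
    obtain ⟨i, rfl⟩ := ha
    obtain ⟨j, rfl⟩ := hb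
    obtain ⟨k, rfl⟩ := hc
    simp only [hpi.extend_apply]
    rw [hpF, hqF]

section cert

variable {n : ℕ} (S W : Fin n → Fin n → Fin n → Bool)

/-- Certificate that the segments `ab` and `cd` do not cross, using the line `uw`. -/
def ncLine (u w a b c d : Fin n) : Bool :=
  W u w a && W u w b && W w u c && W w u d &&
    ((S u w a && S u w b) || (S w u c && S w u d) ||
     ((S u w a || S u w b) && (S w u c || S w u d)) ||
     (S u w b && (a == c || a == d)) || (S u w a && (b == c || b == d)) ||
     (S w u d && (c == a || c == b)) || (S w u c && (d == a || d == b)))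

/-- Certificate that `ab` and `cd` cross. -/
def crossCert (a b c d : Fin n) : Bool := S b a c && S a b d && W c d a && W d c b

/-- Certificate that the segment `xy` misses the open triangle `abc`. -/
def sepLine (u w a b c x y : Fin n) : Bool :=
  W u w a && W u w b && W u w c && W w u x && W w u y && (u != w)

/-- Certificate that a functional which is nonpositive from `v` vanishes on the direction `va`. -/
def killCert (v a : Fin n) : Prop := ∃ c d, S v c d = true ∧ W v d a = true ∧ W v a c = true

instance (v a : Fin n) : Decidable (killCert S W v a) := by unfold killCert; infer_instance

/-- All certificates for a combinatorial type. -/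
structure Good (T : Fin n → Fin n → Bool) (F : Fin n → Fin n → Fin n → Bool)
    (H : Fin n → Bool) : Prop where
  symm : ∀ a b, T a b = true → T b a = true
  irr : ∀ a, T a a = false
  inj : ∀ i j, i ≠ j → ∃ k l, S i k l = true ∧ W j l k = true
  nc : ∀ a b, T a b = true → ∀ c d, T c d = true → (a = c ∧ b = d) ∨ (a = d ∧ b = c) ∨
    ∃ u w, ncLine S W u w a b c d = true
  mx : ∀ c d, c ≠ d → T c d = true ∨ ∃ a b, T a b = true ∧ crossCert S W a b c d = true
  face : ∀ a b c, F a b c = true → T a b = true ∧ T b c = true ∧ T a c = true ∧ S a b c = true ∧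
    ∀ x y, (T x y = true ∨ x = y) → ∃ u w, sepLine W u w a b c x y = true
  nface : ∀ a b, T a b = true → ∀ c, T b c = true → T a c = true → F a b c = true ∨
    W b a c = true ∨ ∃ d, S a b d = true ∧ S b c d = true ∧ S c a d = true
  hull : ∀ v, H v = true → ∃ u, u ≠ v ∧ ∀ k, W u v k = true
  inner : ∀ v, H v = false → ∃ a b, S v a b = true ∧ killCert S W v a ∧ killCert S W v b
  exF : ∃ a b c, S a b c = true

end cert

lemma mem_segSet {n : ℕ} {p : Fin n → Pt} {T : Fin n → Fin n → Bool}
    (hsym : ∀ a b, T a b = true → T b a = true) {a b : Pt} (h : s(a, b) ∈ segSet p T) :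
    ∃ i j, T i j = true ∧ a = p i ∧ b = p j := by
  obtain ⟨i, j, hT, he⟩ := h
  rw [Sym2.eq_iff] at he
  rcases he with ⟨rfl, rfl⟩ | ⟨rfl, rfl⟩
  · exact ⟨i, j, hT, rfl, rfl⟩
  · exact ⟨j, i, hsym _ _ hT, rfl, rfl⟩

lemma not_crosses_of {u w a b c d : Pt} (ha : ori u w a ≤ 0) (hb : ori u w b ≤ 0)
    (hc : ori w u c ≤ 0) (hd : ori w u d ≤ 0)
    (h : (ori u w a < 0 ∧ ori u w b < 0) ∨ (ori w u c < 0 ∧ ori w u d < 0) ∨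
      ((ori u w a < 0 ∨ ori u w b < 0) ∧ (ori w u c < 0 ∨ ori w u d < 0)) ∨
      (ori u w b < 0 ∧ (a = c ∨ a = d)) ∨ (ori u w a < 0 ∧ (b = c ∨ b = d)) ∨
      (ori w u d < 0 ∧ (c = a ∨ c = b)) ∨ (ori w u c < 0 ∧ (d = a ∨ d = b))) :
    ¬ Crosses a b c d := by
  rintro ⟨x, hx1, hx2, hx3⟩
  obtain ⟨h1, h1'⟩ := seg_le hx1 ha hb
  obtain ⟨h2, h2'⟩ := seg_le hx2 hc hd
  have h0 : ori u w x = 0 := by rw [ori_swap] at h2; linarith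
  have h0' : ori w u x = 0 := by rw [ori_swap]; linarith
  obtain ⟨e1, e2⟩ := h1' h0
  obtain ⟨e3, e4⟩ := h2' h0'
  rcases h with ⟨h, h'⟩ | ⟨h, h'⟩ | ⟨h | h, h' | h'⟩ | ⟨h, h'⟩ | ⟨h, h'⟩ | ⟨h, h'⟩ | ⟨h, h'⟩
  · have := e1 h; subst this; linarith
  · have := e3 h; subst this; linarith
  · exact hx3 ⟨Or.inr (e1 h), Or.inr (e3 h')⟩
  · exact hx3 ⟨Or.inr (e1 h), Or.inl (e4 h')⟩
  · exact hx3 ⟨Or.inl (e2 h), Or.inr (e3 h')⟩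
  · exact hx3 ⟨Or.inl (e2 h), Or.inl (e4 h')⟩
  · have := e2 h; subst this; exact hx3 ⟨Or.inl rfl, h'⟩
  · have := e1 h; subst this; exact hx3 ⟨Or.inr rfl, h'⟩
  · have := e4 h; subst this; exact hx3 ⟨h', Or.inl rfl⟩
  · have := e3 h; subst this; exact hx3 ⟨h', Or.inr rfl⟩

/-- A functional nonpositive on three directions positively related vanishes. -/
lemma kill_aux {v a c d g : Pt} (h1 : ori v c d < 0) (h2 : ori v d a ≤ 0) (h3 : ori v a c ≤ 0)
    (ga : det2 g (a - v) ≤ 0) (gc : det2 g (c - v) ≤ 0) (gd : det2 g (d - v) ≤ 0) :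
    det2 g (a - v) = 0 := by
  have key : ori v c d * det2 g (a - v) + ori v d a * det2 g (c - v)
      + ori v a c * det2 g (d - v) = 0 := by
    simp only [ori, det2, Prod.fst_sub, Prod.snd_sub]; ring
  have t1 := mul_nonneg (neg_nonneg.2 h2) (neg_nonneg.2 gc)
  have t2 := mul_nonneg (neg_nonneg.2 h3) (neg_nonneg.2 gd)
  by_contra hne
  have := mul_pos (neg_pos.2 h1) (neg_pos.2 (lt_of_le_of_ne ga hne))
  nlinarith

lemma kill_zero {v a b g : Pt} (h : ori v a b < 0) (ga : det2 g (a - v) = 0)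
    (gb : det2 g (b - v) = 0) : g = 0 := by
  have k1 : g.1 * ori v a b = 0 := by
    have : g.1 * ori v a b = (a - v).1 * det2 g (b - v) - (b - v).1 * det2 g (a - v) := by
      simp only [ori, det2, Prod.fst_sub, Prod.snd_sub]; ring
    rw [this, ga, gb]; ring
  have k2 : g.2 * ori v a b = 0 := by
    have : g.2 * ori v a b = (a - v).2 * det2 g (b - v) - (b - v).2 * det2 g (a - v) := by
      simp only [ori, det2, Prod.fst_sub, Prod.snd_sub]; ring
    rw [this, ga, gb]; ring
  have e1 := (mul_eq_zero.1 k1).resolve_right h.ne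
  have e2 := (mul_eq_zero.1 k2).resolve_right h.ne
  exact Prod.ext e1 e2

lemma centroid_mem {a b c : Pt} (h : ori a b c < 0) : (openTriangle a b c).Nonempty := by
  refine ⟨((a.1+b.1+c.1)/3, (a.2+b.2+c.2)/3), mem_openTriangle ?_ ?_ ?_⟩ <;>
  · simp only [ori, det2, Prod.fst_sub, Prod.snd_sub] at h ⊢
    linarith

theorem good_realizes {n : ℕ} {S W : Fin n → Fin n → Fin n → Bool} {T : Fin n → Fin n → Bool}
    {F : Fin n → Fin n → Fin n → Bool} {H : Fin n → Bool} (G : Good S W T F H)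
    (P : Finset Pt) (hcard : P.card = n) (p : Fin n → Pt) (hpP : ∀ i, p i ∈ P)
    (hS : ∀ i j k, S i j k = true → ori (p i) (p j) (p k) < 0)
    (hW : ∀ i j k, W i j k = true → ori (p i) (p j) (p k) ≤ 0) :
    Realizes P T F ∧ hullCount P = (Finset.univ.filter fun v => H v = true).card := by
  have hinj : Function.Injective p := by
    intro i j hij
    by_contra hne
    obtain ⟨k, l, h1, h2⟩ := G.inj i j hne
    have h1 := hS _ _ _ h1
    have h2 := hW _ _ _ h2
    rw [hij] at h1
    have : ori (p j) (p k) (p l) = - ori (p j) (p l) (p k) := by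
      simp only [ori, det2, Prod.fst_sub, Prod.snd_sub]; ring
    linarith
  have himg : P = Finset.univ.image p := by
    symm
    apply Finset.eq_of_subset_of_card_le
    · intro x hx
      simp only [Finset.mem_image, Finset.mem_univ, true_and] at hx
      obtain ⟨i, rfl⟩ := hx
      exact hpP i
    · rw [Finset.card_image_of_injective _ hinj, hcard]; simp
  have hmem : ∀ x ∈ P, ∃ i, x = p i := by
    intro x hx
    rw [himg] at hx
    simp only [Finset.mem_image, Finset.mem_univ, true_and] at hx
    obtain ⟨i, rfl⟩ := hx
    exact ⟨i, rfl⟩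
  have hne : ∀ i j, T i j = true → p i ≠ p j := by
    intro i j h he
    have := hinj he
    subst this
    rw [G.irr] at h; exact Bool.false_ne_true h
  have hvalid : ValidSegs P (segSet p T) := by
    constructor
    · rintro e ⟨i, j, hT, rfl⟩
      exact ⟨p i, p j, hpP i, hpP j, hne i j hT, rfl⟩
    · intro a b c d hab hcd hdiff
      obtain ⟨a, b, hTab, rfl, rfl⟩ := mem_segSet G.symm hab
      obtain ⟨c, d, hTcd, rfl, rfl⟩ := mem_segSet G.symm hcd
      rcases G.nc a b hTab c d hTcd with ⟨rfl, rfl⟩ | ⟨rfl, rfl⟩ | ⟨u, w, h⟩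
      · exact absurd rfl hdiff
      · exact absurd Sym2.eq_swap hdiff
      · simp only [ncLine, Bool.and_eq_true, Bool.or_eq_true, beq_iff_eq] at h
        obtain ⟨⟨⟨⟨h1, h2⟩, h3⟩, h4⟩, h5⟩ := h
        apply not_crosses_of (hW _ _ _ h1) (hW _ _ _ h2) (hW _ _ _ h3) (hW _ _ _ h4)
        have hp : ∀ {x y z : Fin n}, x = y ∨ x = z → p x = p y ∨ p x = p z := fun h =>
          h.imp (congrArg p) (congrArg p)
        rcases h5 with (((((⟨h, h'⟩ | ⟨h, h'⟩) | ⟨h, h'⟩) | ⟨h, h'⟩) | ⟨h, h'⟩) | ⟨h, h'⟩) | ⟨h, h'⟩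
        · exact Or.inl ⟨hS _ _ _ h, hS _ _ _ h'⟩
        · exact Or.inr (Or.inl ⟨hS _ _ _ h, hS _ _ _ h'⟩)
        · exact Or.inr (Or.inr (Or.inl ⟨h.imp (hS _ _ _) (hS _ _ _), h'.imp (hS _ _ _) (hS _ _ _)⟩))
        · exact Or.inr (Or.inr (Or.inr (Or.inl ⟨hS _ _ _ h, hp h'⟩)))
        · exact Or.inr (Or.inr (Or.inr (Or.inr (Or.inl ⟨hS _ _ _ h, hp h'⟩))))
        · exact Or.inr (Or.inr (Or.inr (Or.inr (Or.inr (Or.inl ⟨hS _ _ _ h, hp h'⟩)))))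
        · exact Or.inr (Or.inr (Or.inr (Or.inr (Or.inr (Or.inr ⟨hS _ _ _ h, hp h'⟩)))))
  have htri : IsTriangulation P (segSet p T) := by
    refine ⟨hvalid, fun T' hT' hsub => Subset.antisymm ?_ hsub⟩
    intro e he
    obtain ⟨a, b, ha, hb, hab, rfl⟩ := hT'.1 e he
    obtain ⟨c, rfl⟩ := hmem a ha
    obtain ⟨d, rfl⟩ := hmem b hb
    have hcd : c ≠ d := fun h => hab (h ▸ rfl)
    rcases G.mx c d hcd with h | ⟨a, b, hT, hx⟩
    · exact ⟨c, d, h, rfl⟩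
    · by_contra hnot
      have hin : s(p a, p b) ∈ segSet p T := ⟨a, b, hT, rfl⟩
      simp only [crossCert, Bool.and_eq_true] at hx
      obtain ⟨⟨⟨h1, h2⟩, h3⟩, h4⟩ := hx
      exact hT'.2 _ _ _ _ (hsub hin) he (fun h => hnot (h ▸ hin))
        (crosses_of (hS _ _ _ h1) (hS _ _ _ h2) (hW _ _ _ h3) (hW _ _ _ h4))
  refine ⟨⟨p, hinj, himg, htri, ?_⟩, ?_⟩
  · intro a b c
    constructor
    · rintro ⟨⟨-, -, -, -, -, -, hab, hbc, hac, hpt, -⟩, hcw⟩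
      have key : ∀ i j, s(p i, p j) ∈ segSet p T → T i j = true := by
        intro i j h
        obtain ⟨i', j', h, h1, h2⟩ := mem_segSet G.symm h
        rwa [hinj h1, hinj h2]
      rcases G.nface a b (key _ _ hab) c (key _ _ hbc) (key _ _ hac) with h | h | ⟨d, h1, h2, h3⟩
      · exact h
      · have := hW _ _ _ h
        rw [ori_swap] at this
        have hcw : ori (p a) (p b) (p c) < 0 := hcw
        linarith
      · exact absurd (mem_openTriangle (hS _ _ _ h1) (hS _ _ _ h2) (hS _ _ _ h3)) (hpt _ (hpP d))
    · intro h
      obtain ⟨hab, hbc, hac, hs, hsep⟩ := G.face a b c h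
      have hmiss : ∀ x y, (T x y = true ∨ x = y) → ∀ z ∈ segment ℝ (p x) (p y),
          z ∉ openTriangle (p a) (p b) (p c) := by
        intro x y hxy z hz hzt
        obtain ⟨u, w, h⟩ := hsep x y hxy
        simp only [sepLine, Bool.and_eq_true, bne_iff_ne, ne_eq] at h
        obtain ⟨⟨⟨⟨⟨h1, h2⟩, h3⟩, h4⟩, h5⟩, h6⟩ := h
        have k1 := openTriangle_sep (fun h => h6 (hinj h)) (hW _ _ _ h1) (hW _ _ _ h2)
          (hW _ _ _ h3) hzt
        have k2 := (seg_le hz (hW _ _ _ h4) (hW _ _ _ h5)).1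
        rw [ori_swap] at k2
        linarith
      refine ⟨⟨hpP _, hpP _, hpP _, hne _ _ hab, hne _ _ hbc, hne _ _ hac,
        ⟨_, _, hab, rfl⟩, ⟨_, _, hbc, rfl⟩, ⟨_, _, hac, rfl⟩, ?_, ?_⟩, hS _ _ _ hs⟩
      · intro x hx
        obtain ⟨i, rfl⟩ := hmem x hx
        exact hmiss i i (Or.inr rfl) _ (left_mem_segment ℝ _ _)
      · intro u v huv
        obtain ⟨i, j, hT, rfl, rfl⟩ := mem_segSet G.symm huv
        exact hmiss i j (Or.inl hT)
  · have hinn : (interior (convexHull ℝ (P : Set Pt))).Nonempty := by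
      obtain ⟨a, b, c, h⟩ := G.exF
      refine (centroid_mem (hS _ _ _ h)).mono (interior_mono (convexHull_mono ?_))
      intro x hx
      simp only [mem_insert_iff, mem_singleton_iff] at hx
      rcases hx with rfl | rfl | rfl <;> exact hpP _
    have hset : {x : Pt | HullPoint P x}
        = ((Finset.univ.filter fun v => H v = true).image p : Finset Pt) := by
      ext x
      simp only [Finset.coe_image, Finset.coe_filter, Finset.mem_univ, true_and, mem_image,
        mem_ofPred_eq]
      constructor
      · rintro ⟨hx, hfr⟩
        obtain ⟨v, rfl⟩ := hmem x hx
        refine ⟨v, ?_, rfl⟩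
        by_contra hH
        obtain ⟨g, hg, hgk⟩ := supporting hinn hfr
        have hkill : ∀ a, killCert S W v a → det2 g (p a - p v) = 0 := by
          rintro a ⟨c, d, h1, h2, h3⟩
          exact kill_aux (hS _ _ _ h1) (hW _ _ _ h2) (hW _ _ _ h3) (hgk _ (hpP _))
            (hgk _ (hpP _)) (hgk _ (hpP _))
        obtain ⟨a, b, h1, h2, h3⟩ := G.inner v (by simpa using hH)
        exact hg (kill_zero (hS _ _ _ h1) (hkill a h2) (hkill b h3))
      · rintro ⟨v, hH, rfl⟩
        obtain ⟨u, huv, hk⟩ := G.hull v hH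
        refine ⟨hpP v, frontier_of (fun h => huv (hinj h)) (hpP v) ?_⟩
        intro k hkP
        obtain ⟨i, rfl⟩ := hmem k hkP
        exact hW _ _ _ (hk i)
    rw [hullCount, hset, Set.ncard_coe_finset, Finset.card_image_of_injective _ hinj]

/-! ### The combinatorial types -/

/-- Membership of a triple in a list up to cyclic rotation. -/
def rotMem {n : ℕ} (L : List (Fin n × Fin n × Fin n)) (i j k : Fin n) : Bool :=
  L.any fun t => (t.1 == i && (t.2.1 == j && t.2.2 == k)) ||
    ((t.1 == j && (t.2.1 == k && t.2.2 == i)) || (t.1 == k && (t.2.1 == i && t.2.2 == j)))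

/-- Triples known to be clockwise or degenerate. -/
def weakMem {n : ℕ} (L M : List (Fin n × Fin n × Fin n)) (i j k : Fin n) : Bool :=
  i == j || (j == k || (i == k || (rotMem L i j k || rotMem M i j k)))

/-- Adjacency given by a list of edges. -/
def adjMem {n : ℕ} (L : List (Fin n × Fin n)) (i j : Fin n) : Bool :=
  L.any fun t => (t.1 == i && t.2 == j) || (t.1 == j && t.2 == i)

lemma rotMem_sound {n : ℕ} {L : List (Fin n × Fin n × Fin n)} {p : Fin n → Pt} {Q : ℝ → Prop}
    (h : ∀ t ∈ L, Q (ori (p t.1) (p t.2.1) (p t.2.2))) (i j k : Fin n)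
    (hm : rotMem L i j k = true) : Q (ori (p i) (p j) (p k)) := by
  simp only [rotMem, List.any_eq_true, Bool.or_eq_true, Bool.and_eq_true, beq_iff_eq] at hm
  obtain ⟨t, ht, h' | h' | h'⟩ := hm <;> obtain ⟨rfl, rfl, rfl⟩ := h'
  · exact h t ht
  · rw [← ori_rot]; exact h t ht
  · rw [ori_rot]; exact h t ht

lemma weakMem_sound {n : ℕ} {L M : List (Fin n × Fin n × Fin n)} {p : Fin n → Pt}
    (hL : ∀ t ∈ L, ori (p t.1) (p t.2.1) (p t.2.2) < 0)
    (hM : ∀ t ∈ M, ori (p t.1) (p t.2.1) (p t.2.2) ≤ 0) (i j k : Fin n)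
    (hm : weakMem L M i j k = true) : ori (p i) (p j) (p k) ≤ 0 := by
  simp only [weakMem, Bool.or_eq_true, beq_iff_eq] at hm
  rcases hm with rfl | rfl | rfl | h | h
  · exact (ori_self1 _ _).le
  · exact (ori_self2 _ _).le
  · exact (ori_self3 _ _).le
  · exact (rotMem_sound (Q := fun x => x < 0) hL i j k h).le
  · exact rotMem_sound (Q := fun x => x ≤ 0) hM i j k h

/-- The certificates hold for the tables given by lists. -/
abbrev GoodL {n : ℕ} (L M : List (Fin n × Fin n × Fin n)) (E : List (Fin n × Fin n))
    (A : List (Fin n × Fin n × Fin n)) (H : Fin n → Bool) : Prop :=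
  Good (rotMem L) (weakMem L M) (adjMem E) (rotMem A) H

theorem goodL_realizes {n : ℕ} {L M A : List (Fin n × Fin n × Fin n)} {E : List (Fin n × Fin n)}
    {H : Fin n → Bool} (G : GoodL L M E A H)
    (P : Finset Pt) (hcard : P.card = n) (p : Fin n → Pt) (hpP : ∀ i, p i ∈ P)
    (hL : ∀ t ∈ L, ori (p t.1) (p t.2.1) (p t.2.2) < 0)
    (hM : ∀ t ∈ M, ori (p t.1) (p t.2.1) (p t.2.2) ≤ 0) :
    Realizes P (adjMem E) (rotMem A) ∧
      hullCount P = (Finset.univ.filter fun v => H v = true).card :=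
  good_realizes G P hcard p hpP (rotMem_sound (Q := fun x => x < 0) hL) (weakMem_sound hL hM)

/-- Edges and faces of the single triangle. -/
abbrev triE : List (Fin 3 × Fin 3) := [(0, 1), (0, 2), (1, 2)]
abbrev triA : List (Fin 3 × Fin 3 × Fin 3) := [(0, 1, 2)]
abbrev triL : List (Fin 3 × Fin 3 × Fin 3) := [(0, 1, 2)]

/-- Fan with two triangles. -/
abbrev fan4E : List (Fin 4 × Fin 4) := [(0, 1), (0, 2), (0, 3), (1, 2), (2, 3)]
abbrev fan4A : List (Fin 4 × Fin 4 × Fin 4) := [(0, 1, 2), (0, 2, 3)]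
abbrev fan4L : List (Fin 4 × Fin 4 × Fin 4) := [(0, 1, 2), (0, 2, 3)]
abbrev fan4M : List (Fin 4 × Fin 4 × Fin 4) := [(0, 1, 3), (1, 2, 3)]

/-- Wheel with three spokes. -/
abbrev wh3E : List (Fin 4 × Fin 4) := [(0, 1), (0, 2), (0, 3), (1, 2), (2, 3), (1, 3)]
abbrev wh3A : List (Fin 4 × Fin 4 × Fin 4) := [(0, 1, 2), (0, 2, 3), (0, 3, 1)]
abbrev wh3L : List (Fin 4 × Fin 4 × Fin 4) := [(0, 1, 2), (0, 2, 3), (0, 3, 1), (1, 2, 3)]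

/-- Fan with three triangles. -/
abbrev fan5E : List (Fin 5 × Fin 5) := [(0, 1), (0, 2), (0, 3), (0, 4), (1, 2), (2, 3), (3, 4)]
abbrev fan5A : List (Fin 5 × Fin 5 × Fin 5) := [(0, 1, 2), (0, 2, 3), (0, 3, 4)]
abbrev fan5L : List (Fin 5 × Fin 5 × Fin 5) :=
  [(0, 1, 2), (0, 2, 3), (0, 3, 4), (0, 1, 3), (0, 2, 4)]
abbrev fan5M : List (Fin 5 × Fin 5 × Fin 5) :=
  [(0, 1, 4), (1, 2, 3), (1, 2, 4), (1, 3, 4), (2, 3, 4)]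

/-- Wheel with four spokes. -/
abbrev wh4E : List (Fin 5 × Fin 5) :=
  [(0, 1), (0, 2), (0, 3), (0, 4), (1, 2), (2, 3), (3, 4), (4, 1)]
abbrev wh4A : List (Fin 5 × Fin 5 × Fin 5) := [(0, 1, 2), (0, 2, 3), (0, 3, 4), (0, 4, 1)]
abbrev wh4L : List (Fin 5 × Fin 5 × Fin 5) := [(0, 1, 2), (0, 2, 3), (0, 3, 4), (0, 4, 1)]
abbrev wh4M : List (Fin 5 × Fin 5 × Fin 5) :=
  [(1, 2, 3), (2, 3, 4), (3, 4, 1), (4, 1, 2), (1, 3, 0), (2, 4, 0)]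

/-- Triangle with two stacked interior points. -/
abbrev stE : List (Fin 5 × Fin 5) :=
  [(0, 1), (0, 2), (0, 3), (0, 4), (1, 2), (1, 3), (1, 4), (2, 3), (3, 4)]
abbrev stA : List (Fin 5 × Fin 5 × Fin 5) :=
  [(1, 2, 3), (2, 0, 3), (0, 1, 4), (1, 3, 4), (3, 0, 4)]
abbrev stL : List (Fin 5 × Fin 5 × Fin 5) :=
  [(0, 1, 3), (1, 2, 3), (2, 0, 3), (0, 1, 2), (0, 1, 4), (1, 3, 4), (3, 0, 4), (2, 0, 4),
   (1, 2, 4)]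
abbrev stM1 : List (Fin 5 × Fin 5 × Fin 5) := [(2, 4, 3)]
abbrev stM2 : List (Fin 5 × Fin 5 × Fin 5) := [(4, 2, 3)]

lemma tri_good : GoodL triL [] triE triA (fun _ => true) := by
  constructor <;> decide +kernel

lemma fan4_good : GoodL fan4L fan4M fan4E fan4A (fun _ => true) := by
  constructor <;> decide +kernel

lemma wh3_good : GoodL wh3L [] wh3E wh3A (fun v => v != 0) := by
  constructor <;> decide +kernel

lemma fan5_good : GoodL fan5L fan5M fan5E fan5A (fun _ => true) := by
  constructor <;> decide +kernel

lemma wh4_good : GoodL wh4L wh4M wh4E wh4A (fun v => v != 0) := by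
  constructor <;> decide +kernel

lemma st_good1 : GoodL stL stM1 stE stA (fun v => v < 3) := by
  constructor <;> decide +kernel

lemma st_good2 : GoodL stL stM2 stE stA (fun v => v < 3) := by
  constructor <;> decide +kernel
set_option linter.constructorNameAsVariable false

/-! ### Finite search over sign vectors -/

/-- Signs. -/
inductive Sg
  | n
  | z
  | p

/-- Five labels. -/
inductive Five
  | a
  | b
  | c
  | d
  | e

namespace Sg

def neg : Sg → Sg
  | n => p
  | z => z
  | p => n

def mul : Sg → Sg → Sg
  | n, t => t.neg
  | z, _ => z
  | p, t => t

def isN : Sg → Bool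
  | n => true
  | _ => false

def isP : Sg → Bool
  | p => true
  | _ => false

def notP : Sg → Bool
  | p => false
  | _ => true

def isZ : Sg → Bool
  | z => true
  | _ => false

/-- Possible signs of three numbers with sum zero. -/
def sum3 (r s t : Sg) : Bool :=
  bif r.isN || (s.isN || t.isN) then r.isP || (s.isP || t.isP)
  else !(r.isP || (s.isP || t.isP))

/-- Possible signs of four numbers with sum zero. -/
def sum4 (r s t u : Sg) : Bool :=
  bif r.isN || (s.isN || (t.isN || u.isN)) then r.isP || (s.isP || (t.isP || u.isP))
  else !(r.isP || (s.isP || (t.isP || u.isP)))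

def all (f : Sg → Bool) : Bool := f n && (f z && f p)

lemma all_sound {f : Sg → Bool} (h : all f = true) (s : Sg) : f s = true := by
  simp only [all, Bool.and_eq_true] at h
  cases s
  · exact h.1
  · exact h.2.1
  · exact h.2.2

end Sg

namespace Five

def any (f : Five → Bool) : Bool := f a || (f b || (f c || (f d || f e)))

lemma any_sound {f : Five → Bool} (h : any f = true) : ∃ i, f i = true := by
  simp only [any, Bool.or_eq_true] at h
  rcases h with h | h | h | h | h <;> exact ⟨_, h⟩

def any4 (f : Five → Bool) : Bool := f a || (f b || (f c || f d))

lemma any4_sound {f : Five → Bool} (h : any4 f = true) : ∃ i, f i = true := by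
  simp only [any4, Bool.or_eq_true] at h
  rcases h with h | h | h | h <;> exact ⟨_, h⟩

end Five

/-- Implication of booleans. -/
def bimp (x y : Bool) : Bool := bif x then y else true

lemma bimp_sound {x y : Bool} (h : bimp x y = true) (hx : x = true) : y = true := by
  subst hx; exact h

/-- The orientation sign of a triple of labels. -/
def chi (s012 s013 s014 s023 s024 s034 s123 s124 s134 s234 : Sg) (i j k : Five) : Sg :=
  match i, j, k with
  | .a, .b, .c => s012
  | .a, .b, .d => s013
  | .a, .b, .e => s014
  | .a, .c, .b => s012.neg
  | .a, .c, .d => s023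
  | .a, .c, .e => s024
  | .a, .d, .b => s013.neg
  | .a, .d, .c => s023.neg
  | .a, .d, .e => s034
  | .a, .e, .b => s014.neg
  | .a, .e, .c => s024.neg
  | .a, .e, .d => s034.neg
  | .b, .a, .c => s012.neg
  | .b, .a, .d => s013.neg
  | .b, .a, .e => s014.neg
  | .b, .c, .a => s012
  | .b, .c, .d => s123
  | .b, .c, .e => s124
  | .b, .d, .a => s013
  | .b, .d, .c => s123.neg
  | .b, .d, .e => s134
  | .b, .e, .a => s014
  | .b, .e, .c => s124.neg
  | .b, .e, .d => s134.neg
  | .c, .a, .b => s012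
  | .c, .a, .d => s023.neg
  | .c, .a, .e => s024.neg
  | .c, .b, .a => s012.neg
  | .c, .b, .d => s123.neg
  | .c, .b, .e => s124.neg
  | .c, .d, .a => s023
  | .c, .d, .b => s123
  | .c, .d, .e => s234
  | .c, .e, .a => s024
  | .c, .e, .b => s124
  | .c, .e, .d => s234.neg
  | .d, .a, .b => s013
  | .d, .a, .c => s023
  | .d, .a, .e => s034.neg
  | .d, .b, .a => s013.neg
  | .d, .b, .c => s123
  | .d, .b, .e => s134.neg
  | .d, .c, .a => s023.neg
  | .d, .c, .b => s123.neg
  | .d, .c, .e => s234.neg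
  | .d, .e, .a => s034
  | .d, .e, .b => s134
  | .d, .e, .c => s234
  | .e, .a, .b => s014
  | .e, .a, .c => s024
  | .e, .a, .d => s034
  | .e, .b, .a => s014.neg
  | .e, .b, .c => s124
  | .e, .b, .d => s134
  | .e, .c, .a => s024.neg
  | .e, .c, .b => s124.neg
  | .e, .c, .d => s234
  | .e, .d, .a => s034.neg
  | .e, .d, .b => s134.neg
  | .e, .d, .c => s234.neg
  | _, _, _ => .z

def srFan5 (χ : Five → Five → Five → Sg) : Bool :=
  Five.any fun a => Five.any fun b => Five.any fun c => (χ a b c).isN &&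
  Five.any fun d => (χ a c d).isN && ((χ a b d).isN && ((χ b c d).notP &&
  Five.any fun e => (χ a d e).isN && ((χ a c e).isN && ((χ a b e).notP && ((χ b c e).notP &&
    ((χ b d e).notP && (χ c d e).notP))))))

def srWh4 (χ : Five → Five → Five → Sg) : Bool :=
  Five.any fun a => Five.any fun b => Five.any fun c => (χ a b c).isN &&
  Five.any fun d => (χ a c d).isN && ((χ b c d).notP && ((χ b d a).notP &&
  Five.any fun e => (χ a d e).isN && ((χ a e b).isN && ((χ c d e).notP && ((χ d e b).notP &&
    ((χ e b c).notP && (χ c e a).notP))))))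

def srSt (m : Bool) (χ : Five → Five → Five → Sg) : Bool :=
  Five.any fun a => Five.any fun b => Five.any fun c => (χ a b c).isN &&
  Five.any fun d => (χ a b d).isN && ((χ b c d).isN && ((χ c a d).isN &&
  Five.any fun e => (χ a b e).isN && ((χ b d e).isN && ((χ d a e).isN && ((χ c a e).isN &&
    ((χ b c e).isN && (bif m then (χ c e d).notP else (χ e c d).notP)))))))

def srFan4 (χ : Five → Five → Five → Sg) : Bool :=
  Five.any4 fun a => Five.any4 fun b => Five.any4 fun c => (χ a b c).isN &&
  Five.any4 fun d => (χ a c d).isN && ((χ a b d).notP && (χ b c d).notP)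

def srWh3 (χ : Five → Five → Five → Sg) : Bool :=
  Five.any4 fun a => Five.any4 fun b => Five.any4 fun c => (χ a b c).isN &&
  Five.any4 fun d => (χ a c d).isN && ((χ a d b).isN && (χ b c d).isN)

def sr5 (χ : Five → Five → Five → Sg) : Bool :=
  srFan5 χ || (srWh4 χ || (srSt true χ || srSt false χ))

def sr4 (χ : Five → Five → Five → Sg) : Bool := srFan4 χ || srWh3 χ

/-- Sign form of the three-term Grassmann-Plücker relation. -/
def gp (χ : Five → Five → Five → Sg) (x b c d e : Five) : Bool :=
  Sg.sum3 ((χ x b c).mul (χ x d e)) ((χ x b d).mul (χ x e c)) ((χ x b e).mul (χ x c d))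

/-- Distinctness of two labels. -/
def dst (χ : Five → Five → Five → Sg) (x y : Five) : Bool :=
  !((χ x y .a).isZ && ((χ x y .b).isZ && (χ x y .c).isZ))

def enum4 : Bool :=
  Sg.all fun s013 => Sg.all fun s023 => Sg.all fun s123 =>
    bimp (Sg.sum4 s123 s023.neg s013 Sg.p) <|
    (fun χ => bimp (dst χ .a .d && (dst χ .b .d && dst χ .c .d)) (sr4 χ))
      (chi .n s013 .z s023 .z .z s123 .n s013 s023)

def enum5 : Bool :=
  Sg.all fun s013 => Sg.all fun s023 => Sg.all fun s123 =>
    bimp (Sg.sum4 s123 s023.neg s013 Sg.p) <|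
  Sg.all fun s014 => Sg.all fun s024 => Sg.all fun s124 =>
    bimp (Sg.sum4 s124 s024.neg s014 Sg.p) <|
  Sg.all fun s034 =>
  Sg.all fun s134 => bimp (Sg.sum4 s134 s034.neg s014 s013.neg) <|
  Sg.all fun s234 => bimp (Sg.sum4 s234 s034.neg s024 s023.neg) <|
    bimp (Sg.sum4 s234 s134.neg s124 s123.neg) <|
    (fun χ => bimp (gp χ .a .b .c .d .e && (gp χ .b .a .c .d .e && (gp χ .c .a .b .d .e &&
      (gp χ .d .a .b .c .e && gp χ .e .a .b .c .d)))) <|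
      bimp (dst χ .a .d && (dst χ .b .d && (dst χ .c .d && (dst χ .a .e && (dst χ .b .e &&
        (dst χ .c .e && dst χ .d .e)))))) (sr5 χ))
      (chi .n s013 s014 s023 s024 s034 s123 s124 s134 s234)

lemma enum4_true : enum4 = true := by decide +kernel

lemma enum5_true : enum5 = true := by decide +kernel

/-! ### From points to sign vectors -/

/-- The sign of a real number. -/
noncomputable def sg (x : ℝ) : Sg := if x < 0 then .n else if x = 0 then .z else .p

lemma sg_neg_of {x : ℝ} (h : x < 0) : sg x = .n := by simp [sg, h]
lemma sg_zero : sg 0 = .z := by simp [sg]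
lemma sg_pos_of {x : ℝ} (h : 0 < x) : sg x = .p := by
  simp [sg, h.ne', not_lt.2 h.le]

lemma sg_neg (x : ℝ) : sg (-x) = (sg x).neg := by
  rcases lt_trichotomy x 0 with h | rfl | h
  · rw [sg_neg_of h, sg_pos_of (by linarith)]; rfl
  · rw [neg_zero, sg_zero]; rfl
  · rw [sg_pos_of h, sg_neg_of (by linarith)]; rfl

lemma sg_mul (x y : ℝ) : sg (x * y) = (sg x).mul (sg y) := by
  rcases lt_trichotomy x 0 with h | rfl | h
  · rw [sg_neg_of h]
    change _ = (sg y).neg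
    rw [← sg_neg]
    rcases lt_trichotomy y 0 with h' | rfl | h'
    · rw [sg_pos_of (mul_pos_of_neg_of_neg h h'), sg_pos_of (by linarith)]
    · simp
    · rw [sg_neg_of (mul_neg_of_neg_of_pos h h'), sg_neg_of (by linarith)]
  · rw [zero_mul, sg_zero]; rfl
  · rw [sg_pos_of h]
    change _ = sg y
    rcases lt_trichotomy y 0 with h' | rfl | h'
    · rw [sg_neg_of (mul_neg_of_pos_of_neg h h'), sg_neg_of h']
    · simp
    · rw [sg_pos_of (mul_pos h h'), sg_pos_of h']

lemma sg_isN {x : ℝ} : (sg x).isN = true ↔ x < 0 := by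
  rcases lt_trichotomy x 0 with h | rfl | h
  · simp [sg_neg_of h, Sg.isN, h]
  · simp [sg_zero, Sg.isN]
  · simp [sg_pos_of h, Sg.isN, h.le]

lemma sg_isP {x : ℝ} : (sg x).isP = true ↔ 0 < x := by
  rcases lt_trichotomy x 0 with h | rfl | h
  · simp [sg_neg_of h, Sg.isP, h.le]
  · simp [sg_zero, Sg.isP]
  · simp [sg_pos_of h, Sg.isP, h]

lemma sg_isZ {x : ℝ} : (sg x).isZ = true ↔ x = 0 := by
  rcases lt_trichotomy x 0 with h | rfl | h
  · simp [sg_neg_of h, Sg.isZ, h.ne]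
  · simp [sg_zero, Sg.isZ]
  · simp [sg_pos_of h, Sg.isZ, h.ne']

lemma sg_notP {x : ℝ} : (sg x).notP = true ↔ x ≤ 0 := by
  rcases lt_trichotomy x 0 with h | rfl | h
  · simp [sg_neg_of h, Sg.notP, h.le]
  · simp [sg_zero, Sg.notP]
  · simp [sg_pos_of h, Sg.notP, h]

lemma sum3_sound {x y z : ℝ} (h : x + y + z = 0) : Sg.sum3 (sg x) (sg y) (sg z) = true := by
  unfold Sg.sum3
  by_cases h1 : x < 0 ∨ y < 0 ∨ z < 0
  · have e : ((sg x).isN || ((sg y).isN || (sg z).isN)) = true := by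
      simpa [sg_isN] using h1
    rw [e, cond_true]
    simp only [Bool.or_eq_true, sg_isP]
    by_contra hc
    push Not at hc
    obtain ⟨h2, h3, h4⟩ := hc
    rcases h1 with h1 | h1 | h1 <;> linarith
  · have e : ((sg x).isN || ((sg y).isN || (sg z).isN)) = false := by
      rw [← Bool.not_eq_true]
      simpa [sg_isN] using h1
    rw [e, cond_false, Bool.not_eq_true', ← Bool.not_eq_true]
    simp only [Bool.or_eq_true, sg_isP]
    push Not at h1 ⊢
    obtain ⟨h2, h3, h4⟩ := h1
    refine ⟨?_, ?_, ?_⟩ <;> linarith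

lemma sum4_sound {x y z w : ℝ} (h : x + y + z + w = 0) :
    Sg.sum4 (sg x) (sg y) (sg z) (sg w) = true := by
  unfold Sg.sum4
  by_cases h1 : x < 0 ∨ y < 0 ∨ z < 0 ∨ w < 0
  · have e : ((sg x).isN || ((sg y).isN || ((sg z).isN || (sg w).isN))) = true := by
      simpa [sg_isN] using h1
    rw [e, cond_true]
    simp only [Bool.or_eq_true, sg_isP]
    by_contra hc
    push Not at hc
    obtain ⟨h2, h3, h4, h5⟩ := hc
    rcases h1 with h1 | h1 | h1 | h1 <;> linarith
  · have e : ((sg x).isN || ((sg y).isN || ((sg z).isN || (sg w).isN))) = false := by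
      rw [← Bool.not_eq_true]
      simpa [sg_isN] using h1
    rw [e, cond_false, Bool.not_eq_true', ← Bool.not_eq_true]
    simp only [Bool.or_eq_true, sg_isP]
    push Not at h1 ⊢
    obtain ⟨h2, h3, h4, h5⟩ := h1
    refine ⟨?_, ?_, ?_, ?_⟩ <;> linarith

/-- Orientation signs of labelled points. -/
noncomputable def osg (p : Five → Pt) (i j k : Five) : Sg := sg (ori (p i) (p j) (p k))

lemma ori_swap' (a b c : Pt) : ori a c b = - ori a b c := by
  simp only [ori, det2, Prod.fst_sub, Prod.snd_sub]; ring

lemma ori_swap'' (a b c : Pt) : ori c b a = - ori a b c := by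
  simp only [ori, det2, Prod.fst_sub, Prod.snd_sub]; ring

lemma ori_rot' (a b c : Pt) : ori c a b = ori a b c := by
  simp only [ori, det2, Prod.fst_sub, Prod.snd_sub]; ring

lemma osg_rot (p : Five → Pt) (i j k : Five) : osg p j k i = osg p i j k := by
  simp only [osg, ori_rot]
lemma osg_rot' (p : Five → Pt) (i j k : Five) : osg p k i j = osg p i j k := by
  simp only [osg, ori_rot']
lemma osg_swap (p : Five → Pt) (i j k : Five) : osg p j i k = (osg p i j k).neg := by
  simp only [osg, ori_swap (p i), sg_neg]
lemma osg_swap' (p : Five → Pt) (i j k : Five) : osg p i k j = (osg p i j k).neg := by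
  simp only [osg, ori_swap' (p i) (p j), sg_neg]
lemma osg_swap'' (p : Five → Pt) (i j k : Five) : osg p k j i = (osg p i j k).neg := by
  simp only [osg, ori_swap'' (p i), sg_neg]
lemma osg_self1 (p : Five → Pt) (i j : Five) : osg p i i j = .z := by
  simp only [osg, ori_self1, sg_zero]
lemma osg_self2 (p : Five → Pt) (i j : Five) : osg p i j j = .z := by
  simp only [osg, ori_self2, sg_zero]
lemma osg_self3 (p : Five → Pt) (i j : Five) : osg p i j i = .z := by
  simp only [osg, ori_self3, sg_zero]

lemma chi_eq (p : Five → Pt) :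
    chi (osg p .a .b .c) (osg p .a .b .d) (osg p .a .b .e) (osg p .a .c .d) (osg p .a .c .e)
      (osg p .a .d .e) (osg p .b .c .d) (osg p .b .c .e) (osg p .b .d .e) (osg p .c .d .e)
      = osg p := by
  funext i j k
  cases i <;> cases j <;> cases k <;> symm <;>
    first
    | rfl
    | exact osg_self1 _ _ _
    | exact osg_self2 _ _ _
    | exact osg_self3 _ _ _
    | exact osg_rot _ _ _ _
    | exact osg_rot' _ _ _ _
    | exact osg_swap _ _ _ _
    | exact osg_swap' _ _ _ _
    | exact osg_swap'' _ _ _ _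

lemma osg_sum4 (p : Five → Pt) (i j k l : Five) :
    Sg.sum4 (osg p j k l) (osg p i k l).neg (osg p i j l) (osg p i j k).neg = true := by
  simp only [osg, ← sg_neg]
  apply sum4_sound
  simp only [ori, det2, Prod.fst_sub, Prod.snd_sub]; ring

lemma osg_gp (p : Five → Pt) (x b c d e : Five) : gp (osg p) x b c d e = true := by
  simp only [gp, osg, ← sg_mul]
  apply sum3_sound
  simp only [ori, det2, Prod.fst_sub, Prod.snd_sub]; ring

lemma osg_dst (p : Five → Pt) (habc : ori (p .a) (p .b) (p .c) < 0) {x y : Five}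
    (hxy : p x ≠ p y) : dst (osg p) x y = true := by
  by_contra h
  simp only [dst, osg, Bool.not_eq_true', Bool.not_eq_false, Bool.and_eq_true, sg_isZ] at h
  obtain ⟨h1, h2, h3⟩ := h
  have k1 : ((p y).1 - (p x).1) * ori (p .a) (p .b) (p .c) = 0 := by
    have : ((p y).1 - (p x).1) * ori (p .a) (p .b) (p .c) =
      ((p .b).1 - (p .a).1) * (ori (p x) (p y) (p .c) - ori (p x) (p y) (p .a))
      - ((p .c).1 - (p .a).1) * (ori (p x) (p y) (p .b) - ori (p x) (p y) (p .a)) := by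
      simp only [ori, det2, Prod.fst_sub, Prod.snd_sub]; ring
    rw [this, h1, h2, h3]; ring
  have k2 : ((p y).2 - (p x).2) * ori (p .a) (p .b) (p .c) = 0 := by
    have : ((p y).2 - (p x).2) * ori (p .a) (p .b) (p .c) =
      ((p .b).2 - (p .a).2) * (ori (p x) (p y) (p .c) - ori (p x) (p y) (p .a))
      - ((p .c).2 - (p .a).2) * (ori (p x) (p y) (p .b) - ori (p x) (p y) (p .a)) := by
      simp only [ori, det2, Prod.fst_sub, Prod.snd_sub]; ring
    rw [this, h1, h2, h3]; ring
  have e1 := (mul_eq_zero.1 k1).resolve_right habc.ne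
  have e2 := (mul_eq_zero.1 k2).resolve_right habc.ne
  exact hxy (Prod.ext (by linarith) (by linarith))

lemma sr4_of (p : Five → Pt) (habc : ori (p .a) (p .b) (p .c) < 0)
    (h1 : p .a ≠ p .d) (h2 : p .b ≠ p .d) (h3 : p .c ≠ p .d) (he : p .e = p .a) :
    sr4 (osg p) = true := by
  have hn : osg p .a .b .c = .n := sg_neg_of habc
  have h := Sg.all_sound (Sg.all_sound (Sg.all_sound enum4_true (osg p .a .b .d))
    (osg p .a .c .d)) (osg p .b .c .d)
  have h := bimp_sound h (by have := osg_sum4 p .a .b .c .d; rwa [hn] at this)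
  have e1 : osg p .a .b .e = .z := by simp only [osg, he, ori_self3, sg_zero]
  have e2 : osg p .a .c .e = .z := by simp only [osg, he, ori_self3, sg_zero]
  have e3 : osg p .a .d .e = .z := by simp only [osg, he, ori_self3, sg_zero]
  have e4 : osg p .b .c .e = .n := by
    rw [← hn]; simp only [osg, he, ori_rot (p .a)]
  have e5 : osg p .b .d .e = osg p .a .b .d := by simp only [osg, he, ori_rot (p .a)]
  have e6 : osg p .c .d .e = osg p .a .c .d := by simp only [osg, he, ori_rot (p .a)]
  have hχ := chi_eq p
  rw [e1, e2, e3, e4, e5, e6, hn] at hχ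
  beta_reduce at h
  rw [hχ] at h
  refine bimp_sound h ?_
  rw [osg_dst p habc h1, osg_dst p habc h2, osg_dst p habc h3]; rfl

lemma sr5_of (p : Five → Pt) (habc : ori (p .a) (p .b) (p .c) < 0)
    (h1 : p .a ≠ p .d) (h2 : p .b ≠ p .d) (h3 : p .c ≠ p .d)
    (h4 : p .a ≠ p .e) (h5 : p .b ≠ p .e) (h6 : p .c ≠ p .e) (h7 : p .d ≠ p .e) :
    sr5 (osg p) = true := by
  have hn : osg p .a .b .c = .n := sg_neg_of habc
  have h := Sg.all_sound (Sg.all_sound (Sg.all_sound enum5_true (osg p .a .b .d))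
    (osg p .a .c .d)) (osg p .b .c .d)
  have h := bimp_sound h (by have := osg_sum4 p .a .b .c .d; rwa [hn] at this)
  have h := Sg.all_sound (Sg.all_sound (Sg.all_sound h (osg p .a .b .e))
    (osg p .a .c .e)) (osg p .b .c .e)
  have h := bimp_sound h (by have := osg_sum4 p .a .b .c .e; rwa [hn] at this)
  have h := Sg.all_sound (Sg.all_sound h (osg p .a .d .e)) (osg p .b .d .e)
  have h := bimp_sound h (osg_sum4 p .a .b .d .e)
  have h := Sg.all_sound h (osg p .c .d .e)
  have h := bimp_sound h (osg_sum4 p .a .c .d .e)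
  have h := bimp_sound h (osg_sum4 p .b .c .d .e)
  have hχ := chi_eq p
  rw [hn] at hχ
  beta_reduce at h
  rw [hχ] at h
  have h := bimp_sound h (by simp only [osg_gp]; rfl)
  refine bimp_sound h ?_
  rw [osg_dst p habc h1, osg_dst p habc h2, osg_dst p habc h3, osg_dst p habc h4,
    osg_dst p habc h5, osg_dst p habc h6, osg_dst p habc h7]; rfl

lemma osg_isN {p : Five → Pt} {i j k : Five} :
    (osg p i j k).isN = true ↔ ori (p i) (p j) (p k) < 0 := sg_isN

lemma osg_notP {p : Five → Pt} {i j k : Five} :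
    (osg p i j k).notP = true ↔ ori (p i) (p j) (p k) ≤ 0 := sg_notP

/-- Classification of sets of three points. -/
lemma classify3 (P : Finset Pt) (hc : P.card = 3) (hP : ¬ Collinear ℝ (P : Set Pt)) :
    Realizes P (adjMem triE) (rotMem triA) := by
  obtain ⟨a, b, c, ha, hb, hc', h⟩ := exists_ori_neg hP
  refine (goodL_realizes tri_good P hc ![a, b, c] ?_ ?_ ?_).1
  · intro i; fin_cases i <;> assumption
  · simpa [triL] using h
  · simp

lemma ori_ne {a b c : Pt} (h : ori a b c < 0) : a ≠ b ∧ a ≠ c ∧ b ≠ c := by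
  refine ⟨?_, ?_, ?_⟩ <;> rintro rfl
  · rw [ori_self1] at h; exact lt_irrefl _ h
  · rw [ori_self3] at h; exact lt_irrefl _ h
  · rw [ori_self2] at h; exact lt_irrefl _ h

/-- Classification of sets of four points. -/
lemma classify4 (P : Finset Pt) (hc : P.card = 4) (hP : ¬ Collinear ℝ (P : Set Pt)) :
    (Realizes P (adjMem fan4E) (rotMem fan4A) ∧ hullCount P = 4) ∨
    (Realizes P (adjMem wh3E) (rotMem wh3A) ∧ hullCount P = 3) := by
  obtain ⟨a, b, c, ha, hb, hc', h⟩ := exists_ori_neg hP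
  obtain ⟨n1, n2, n3⟩ := ori_ne h
  have hsub : ({a, b, c} : Finset Pt) ⊆ P := by
    intro x hx
    simp only [Finset.mem_insert, Finset.mem_singleton] at hx
    rcases hx with rfl | rfl | rfl <;> assumption
  have hcard : (P \ {a, b, c}).card = 1 := by
    rw [Finset.card_sdiff_of_subset hsub, hc, Finset.card_eq_three.2 ⟨a, b, c, n1, n2, n3, rfl⟩]
  obtain ⟨d, hd⟩ := Finset.card_eq_one.1 hcard
  have hd' : d ∈ P \ {a, b, c} := by rw [hd]; simp
  simp only [Finset.mem_sdiff, Finset.mem_insert, Finset.mem_singleton, not_or] at hd'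
  obtain ⟨hdP, hda, hdb, hdc⟩ := hd'
  let p : Five → Pt := fun i => match i with
    | .a => a
    | .b => b
    | .c => c
    | .d => d
    | .e => a
  have hpP : ∀ i, p i ∈ P := by intro i; cases i <;> assumption
  have hs := sr4_of p h (Ne.symm hda) (Ne.symm hdb) (Ne.symm hdc) rfl
  simp only [sr4, Bool.or_eq_true] at hs
  rcases hs with hs | hs
  · left
    obtain ⟨i0, hs⟩ := Five.any4_sound hs
    obtain ⟨i1, hs⟩ := Five.any4_sound hs
    obtain ⟨i2, hs⟩ := Five.any4_sound hs
    rw [Bool.and_eq_true] at hs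
    obtain ⟨k1, hs⟩ := hs
    obtain ⟨i3, hs⟩ := Five.any4_sound hs
    simp only [Bool.and_eq_true, osg_isN, osg_notP] at hs k1
    have := goodL_realizes fan4_good P hc ![p i0, p i1, p i2, p i3] (by
      intro i; fin_cases i <;> exact hpP _) (by simpa using ⟨k1, hs.1⟩) (by simpa using hs.2)
    exact ⟨this.1, this.2.trans (by decide)⟩
  · right
    obtain ⟨i0, hs⟩ := Five.any4_sound hs
    obtain ⟨i1, hs⟩ := Five.any4_sound hs
    obtain ⟨i2, hs⟩ := Five.any4_sound hs
    rw [Bool.and_eq_true] at hs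
    obtain ⟨k1, hs⟩ := hs
    obtain ⟨i3, hs⟩ := Five.any4_sound hs
    simp only [Bool.and_eq_true, osg_isN, osg_notP] at hs k1
    have := goodL_realizes wh3_good P hc ![p i0, p i1, p i2, p i3] (by
      intro i; fin_cases i <;> exact hpP _) (by simpa using ⟨k1, hs⟩) (by simp)
    exact ⟨this.1, this.2.trans (by decide)⟩

/-- Classification of sets of five points. -/
lemma classify5 (P : Finset Pt) (hc : P.card = 5) (hP : ¬ Collinear ℝ (P : Set Pt)) :
    (Realizes P (adjMem fan5E) (rotMem fan5A) ∧ hullCount P = 5) ∨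
    (Realizes P (adjMem wh4E) (rotMem wh4A) ∧ hullCount P = 4) ∨
    (Realizes P (adjMem stE) (rotMem stA) ∧ hullCount P = 3) := by
  obtain ⟨a, b, c, ha, hb, hc', h⟩ := exists_ori_neg hP
  obtain ⟨n1, n2, n3⟩ := ori_ne h
  have hsub : ({a, b, c} : Finset Pt) ⊆ P := by
    intro x hx
    simp only [Finset.mem_insert, Finset.mem_singleton] at hx
    rcases hx with rfl | rfl | rfl <;> assumption
  have hcard : (P \ {a, b, c}).card = 2 := by
    rw [Finset.card_sdiff_of_subset hsub, hc, Finset.card_eq_three.2 ⟨a, b, c, n1, n2, n3, rfl⟩]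
  obtain ⟨d, e, hde, hd⟩ := Finset.card_eq_two.1 hcard
  have hd' : d ∈ P \ {a, b, c} := by rw [hd]; simp
  have he' : e ∈ P \ {a, b, c} := by rw [hd]; simp
  simp only [Finset.mem_sdiff, Finset.mem_insert, Finset.mem_singleton, not_or] at hd' he'
  obtain ⟨hdP, hda, hdb, hdc⟩ := hd'
  obtain ⟨heP, hea, heb, hec⟩ := he'
  let p : Five → Pt := fun i => match i with
    | .a => a
    | .b => b
    | .c => c
    | .d => d
    | .e => e
  have hpP : ∀ i, p i ∈ P := by intro i; cases i <;> assumption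
  have hs := sr5_of p h (Ne.symm hda) (Ne.symm hdb) (Ne.symm hdc) (Ne.symm hea) (Ne.symm heb)
    (Ne.symm hec) hde
  simp only [sr5, Bool.or_eq_true] at hs
  have hst : ∀ m, srSt m (osg p) = true →
      Realizes P (adjMem stE) (rotMem stA) ∧ hullCount P = 3 := by
    intro m hs
    obtain ⟨i0, hs⟩ := Five.any_sound hs
    obtain ⟨i1, hs⟩ := Five.any_sound hs
    obtain ⟨i2, hs⟩ := Five.any_sound hs
    rw [Bool.and_eq_true] at hs
    obtain ⟨k1, hs⟩ := hs
    obtain ⟨i3, hs⟩ := Five.any_sound hs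
    simp only [Bool.and_eq_true] at hs
    obtain ⟨k2, k3, k4, hs⟩ := hs
    obtain ⟨i4, hs⟩ := Five.any_sound hs
    simp only [Bool.and_eq_true] at hs
    obtain ⟨k5, k6, k7, k8, k9, k10⟩ := hs
    rw [osg_isN] at k1 k2 k3 k4 k5 k6 k7 k8 k9
    have hq : ∀ i, (![p i0, p i1, p i2, p i3, p i4] : Fin 5 → Pt) i ∈ P := by
      intro i; fin_cases i <;> exact hpP _
    cases m
    · rw [cond_false, osg_notP] at k10
      have := goodL_realizes st_good2 P hc ![p i0, p i1, p i2, p i3, p i4] hq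
        (by simpa using ⟨k2, k3, k4, k1, k5, k6, k7, k8, k9⟩) (by simpa using k10)
      exact ⟨this.1, this.2.trans (by decide)⟩
    · rw [cond_true, osg_notP] at k10
      have := goodL_realizes st_good1 P hc ![p i0, p i1, p i2, p i3, p i4] hq
        (by simpa using ⟨k2, k3, k4, k1, k5, k6, k7, k8, k9⟩) (by simpa using k10)
      exact ⟨this.1, this.2.trans (by decide)⟩
  rcases hs with hs | hs | hs | hs
  · left
    obtain ⟨i0, hs⟩ := Five.any_sound hs
    obtain ⟨i1, hs⟩ := Five.any_sound hs
    obtain ⟨i2, hs⟩ := Five.any_sound hs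
    rw [Bool.and_eq_true] at hs
    obtain ⟨k1, hs⟩ := hs
    obtain ⟨i3, hs⟩ := Five.any_sound hs
    simp only [Bool.and_eq_true] at hs
    obtain ⟨k2, k3, k4, hs⟩ := hs
    obtain ⟨i4, hs⟩ := Five.any_sound hs
    simp only [Bool.and_eq_true] at hs
    obtain ⟨k5, k6, k7, k8, k9, k10⟩ := hs
    rw [osg_isN] at k1 k2 k3 k5 k6
    rw [osg_notP] at k4 k7 k8 k9 k10
    have hq : ∀ i, (![p i0, p i1, p i2, p i3, p i4] : Fin 5 → Pt) i ∈ P := by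
      intro i; fin_cases i <;> exact hpP _
    have := goodL_realizes fan5_good P hc ![p i0, p i1, p i2, p i3, p i4] hq
      (by simpa using ⟨k1, k2, k5, k3, k6⟩) (by simpa using ⟨k7, k4, k8, k9, k10⟩)
    exact ⟨this.1, this.2.trans (by decide)⟩
  · right; left
    obtain ⟨i0, hs⟩ := Five.any_sound hs
    obtain ⟨i1, hs⟩ := Five.any_sound hs
    obtain ⟨i2, hs⟩ := Five.any_sound hs
    rw [Bool.and_eq_true] at hs
    obtain ⟨k1, hs⟩ := hs
    obtain ⟨i3, hs⟩ := Five.any_sound hs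
    simp only [Bool.and_eq_true] at hs
    obtain ⟨k2, k3, k4, hs⟩ := hs
    obtain ⟨i4, hs⟩ := Five.any_sound hs
    simp only [Bool.and_eq_true] at hs
    obtain ⟨k5, k6, k7, k8, k9, k10⟩ := hs
    rw [osg_isN] at k1 k2 k5 k6
    rw [osg_notP] at k3 k4 k7 k8 k9 k10
    have hq : ∀ i, (![p i0, p i1, p i2, p i3, p i4] : Fin 5 → Pt) i ∈ P := by
      intro i; fin_cases i <;> exact hpP _
    have := goodL_realizes wh4_good P hc ![p i0, p i1, p i2, p i3, p i4] hq
      (by simpa using ⟨k1, k2, k5, k6⟩) (by simpa using ⟨k3, k7, k8, k9, k4, k10⟩)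
    exact ⟨this.1, this.2.trans (by decide)⟩
  · exact Or.inr (Or.inr (hst _ hs))
  · exact Or.inr (Or.inr (hst _ hs))

lemma three_le {P : Finset Pt} (hP : ¬ Collinear ℝ (P : Set Pt)) : 3 ≤ P.card := by
  obtain ⟨a, b, c, ha, hb, hc', h⟩ := exists_ori_neg hP
  obtain ⟨n1, n2, n3⟩ := ori_ne h
  rw [← Finset.card_eq_three.2 ⟨a, b, c, n1, n2, n3, rfl⟩]
  apply Finset.card_le_card
  intro x hx
  simp only [Finset.mem_insert, Finset.mem_singleton] at hx
  rcases hx with rfl | rfl | rfl <;> assumption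

/-- Two point sets of the same size `n ≤ 5` with the same number of convex
hull points (collinearities allowed) have compatible triangulations. -/
theorem stmt4 (n : ℕ) (hn : n ≤ 5)
    (P Q : Finset Pt) (hPn : P.card = n) (hQn : Q.card = n)
    (hP : ¬ Collinear ℝ (P : Set Pt)) (hQ : ¬ Collinear ℝ (Q : Set Pt))
    (hcount : hullCount P = hullCount Q) :
    ∃ TP TQ : Set (Sym2 Pt), IsTriangulation P TP ∧ IsTriangulation Q TQ ∧
      Compatible P Q TP TQ := by
  have h3 := three_le hP
  rw [hPn] at h3
  have hcases : n = 3 ∨ n = 4 ∨ n = 5 := by omega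
  rcases hcases with rfl | rfl | rfl
  · exact compatible_of_realizes (classify3 P hPn hP) (classify3 Q hQn hQ)
  · rcases classify4 P hPn hP with ⟨h1, h2⟩ | ⟨h1, h2⟩ <;>
      rcases classify4 Q hQn hQ with ⟨h1', h2'⟩ | ⟨h1', h2'⟩ <;>
      first
      | exact compatible_of_realizes h1 h1'
      | (exfalso; omega)
  · rcases classify5 P hPn hP with ⟨h1, h2⟩ | ⟨h1, h2⟩ | ⟨h1, h2⟩ <;>
      rcases classify5 Q hQn hQ with ⟨h1', h2'⟩ | ⟨h1', h2'⟩ | ⟨h1', h2'⟩ <;>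
      first
      | exact compatible_of_realizes h1 h1'
      | (exfalso; omega)
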